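/- Suppose d = d(n) := p(n)·n satisfies (log n)^3 ≪ d ≪ n. Let i = i(n) ∈ ℕ be the largest integer such that c = c(n) := d^i/n ≤ 3·log n, and suppose c − (log d − log log d) → ∞ as n → ∞. Then asymptotically almost surely, for G ∈ G(n,p): ζ(G) ≤ (1 + o(1))·(log d + 2·log log n)·n/d^{i−1}. -/

import Mathlib

open Filter SimpleGraph Set
open scoped Topology

noncomputable section

/-- The probability, under the Erdős–Rényi binomial random graph `G(n,p)`, of a set `A`
of graphs on vertex set `Fin n`: each pair of distinct vertices is an edge
independently with probability `p`. -/
noncomputable def gnpProb (n : ℕ) (p : ℝ) (A : Set (SimpleGraph (Fin n))) : ℝ := by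
  classical
  exact ∑ G ∈ Finset.univ.filter (fun G : SimpleGraph (Fin n) => G ∈ A),
      p ^ (Nat.card G.edgeSet) * (1 - p) ^ (n.choose 2 - Nat.card G.edgeSet)

/-- A sequence of graph events `A n ⊆ G(n, p n)` holds asymptotically almost surely. -/
def AAS (p : ℕ → ℝ) (A : (n : ℕ) → Set (SimpleGraph (Fin n))) : Prop :=
  Tendsto (fun n : ℕ => gnpProb n (p n) (A n)) atTop (nhds 1)

/-- The set of vertices at graph distance exactly `j` from `v`. -/
def gSphere {V : Type*} (G : SimpleGraph V) (v : V) (j : ℕ) : Set V :=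
  {u | G.edist v u = j}

/-- The set of vertices at graph distance at most `j` from some vertex of `A`. -/
def gBall {V : Type*} (G : SimpleGraph V) (A : Set V) (j : ℕ) : Set V :=
  {u | ∃ v ∈ A, G.edist v u ≤ j}

/-- The result of probing with sensor set `S` while the robber is at `v`: the cops
learn the sensor set together with the distance from each sensor to the robber. -/
noncomputable def probe {V : Type*} (G : SimpleGraph V) (S : Finset V) (v : V) :
    Finset V × (V → ℕ) := by
  classical
  exact (S, fun s => if s ∈ S then G.dist s v else 0)

/-- A cop strategy: given the list of past probe results, choose the next sensor set. -/
def CopStrategy (V : Type*) : Type _ := List (Finset V × (V → ℕ)) → Finset V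

/-- A robber trajectory: at each step the robber either stays or moves along an edge. -/
def IsRobberWalk {V : Type*} (G : SimpleGraph V) (w : ℕ → V) : Prop :=
  ∀ t, w (t + 1) = w t ∨ G.Adj (w t) (w (t + 1))

/-- The history of probe results produced in the first `t` rounds when the cops play
strategy `σ` against the robber walk `w` (round `t+1` probes position `w t`). -/
noncomputable def gameHistory {V : Type*} (G : SimpleGraph V) (σ : CopStrategy V)
    (w : ℕ → V) : ℕ → List (Finset V × (V → ℕ))
  | 0 => []
  | t + 1 => gameHistory G σ w t ++ [probe G (σ (gameHistory G σ w t)) (w t)]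

/-- The cops win the localization game on `G` with `k` sensors: there is a strategy,
probing exactly `k` vertices each round, such that for every robber walk there is a
round in which every robber walk producing the same probe results is at the same
vertex, i.e. the cops can locate the robber. -/
def CopsWin {V : Type*} (G : SimpleGraph V) (k : ℕ) : Prop :=
  ∃ σ : CopStrategy V, (∀ h, (σ h).card = k) ∧
    ∀ w : ℕ → V, IsRobberWalk G w → ∃ t : ℕ,
      ∀ w' : ℕ → V, IsRobberWalk G w' →
        gameHistory G σ w' (t + 1) = gameHistory G σ w (t + 1) → w' t = w t

/-- The localization number `ζ(G)`: the least number of sensors with which the cops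
can win the localization game on `G`. -/
noncomputable def localizationNumber {V : Type*} (G : SimpleGraph V) : ℕ :=
  sInf {k | CopsWin G k}

end

open MeasureTheory ProbabilityTheory unitInterval

/-!
Explore `G(n, p)` by breadth-first search from one or two vertices. Given the explored part, each
unexplored vertex joins the next layer independently of the others, so by a Chernoff bound every
layer is larger than the previous one by a factor `d * (1 ± δ)`, as long as the explored part is
small compared with `n`. Put `r = i - 1`. The sphere of radius `r` around a vertex then has about
`d ^ r` elements, and the set of vertices at distance `r` from a pair `{u, v}` about `2 * d ^ r`, so
the two spheres are almost disjoint, and each of their roughly `2 * d ^ r` elements distinguishes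
`u` from `v` by its distances.

Choosing `k` sensors greedily therefore leaves at most a fraction
`(1 - 2 * d ^ r / n) ^ k ≈ exp (-2 * k * d ^ r / n)` of the pairs of candidate positions
unseparated. For `k` slightly above `log d * n / d ^ r` this fraction is below `1 / (18 * d ^ 2)`,
so a probe shrinks the candidate set by a factor of more than `3 * d`, whereas one move of the
robber enlarges it by at most this factor. The candidate set hence shrinks from round to round until
a single position is left.
-/

section Chernoff

variable {Ω ι : Type*} {mΩ : MeasurableSpace Ω} {P : Measure Ω}

theorem exp_mul_le_one_add_mul_exp_sub_one {x : ℝ} (hx : x ∈ Icc (0 : ℝ) 1) (t : ℝ) :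
    Real.exp (t * x) ≤ 1 + (Real.exp t - 1) * x := by
  have h := convexOn_exp.2 (mem_univ 0) (mem_univ t) (sub_nonneg.2 hx.2) hx.1
    (sub_add_cancel 1 x)
  simp only [smul_eq_mul, mul_zero, zero_add, Real.exp_zero, mul_one] at h
  rw [mul_comm t]
  linarith

theorem mgf_le_exp_integral_mul [IsProbabilityMeasure P] {X : Ω → ℝ} (hX : AEMeasurable X P)
    (h01 : ∀ᵐ ω ∂P, X ω ∈ Icc (0 : ℝ) 1) {t : ℝ} (ht : |t| ≤ 1) :
    mgf X P t ≤ Real.exp (P[X] * (t + t ^ 2)) := by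
  have hint : Integrable X P := .of_mem_Icc 0 1 hX h01
  have hexp : Real.exp t - 1 ≤ t + t ^ 2 := by
    linarith [(abs_le.1 (Real.abs_exp_sub_one_sub_id_le ht)).2]
  calc mgf X P t ≤ ∫ ω, 1 + (Real.exp t - 1) * X ω ∂P := by
        refine integral_mono_of_nonneg (ae_of_all _ fun _ ↦ (Real.exp_pos _).le)
          ((integrable_const 1).add (hint.const_mul _)) ?_
        filter_upwards [h01] with ω hω using exp_mul_le_one_add_mul_exp_sub_one hω t
    _ = P[X] * (Real.exp t - 1) + 1 := by
        rw [integral_add (integrable_const 1) (hint.const_mul _), integral_const_mul]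
        simp [mul_comm, add_comm]
    _ ≤ Real.exp (P[X] * (Real.exp t - 1)) := Real.add_one_le_exp _
    _ ≤ Real.exp (P[X] * (t + t ^ 2)) := by
        gcongr
        exact integral_nonneg_of_ae (h01.mono fun ω hω ↦ hω.1)

theorem mgf_sum_le_exp_integral_mul {X : ι → Ω → ℝ}
    (hX : ∀ i, AEMeasurable (X i) P) (hind : iIndepFun X P)
    (h01 : ∀ i, ∀ᵐ ω ∂P, X i ω ∈ Icc (0 : ℝ) 1) (s : Finset ι) {t : ℝ} (ht : |t| ≤ 1) :
    mgf (∑ i ∈ s, X i) P t ≤ Real.exp ((∑ i ∈ s, P[X i]) * (t + t ^ 2)) := by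
  have := hind.isProbabilityMeasure
  rw [hind.mgf_sum₀ hX, Finset.sum_mul, Real.exp_sum]
  exact Finset.prod_le_prod (fun _ _ ↦ mgf_nonneg) fun i _ ↦
    mgf_le_exp_integral_mul (hX i) (h01 i) ht

/-- A Chernoff bound with tilting parameter `± δ / 2`. -/
theorem measureReal_sum_notMem_Icc_le {X : ι → Ω → ℝ}
    (hX : ∀ i, Measurable (X i)) (hind : iIndepFun X P)
    (h01 : ∀ i, ∀ᵐ ω ∂P, X i ω ∈ Icc (0 : ℝ) 1) (s : Finset ι) {δ : ℝ} (hδ0 : 0 ≤ δ)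
    (hδ2 : δ ≤ 2) :
    P.real {ω | ∑ i ∈ s, X i ω ∉
        Icc ((1 - δ) * ∑ i ∈ s, P[X i]) ((1 + δ) * ∑ i ∈ s, P[X i])} ≤
      2 * Real.exp (-((∑ i ∈ s, P[X i]) * δ ^ 2 / 4)) := by
  have := hind.isProbabilityMeasure
  set μ := ∑ i ∈ s, P[X i]
  have hint (t : ℝ) : Integrable (fun ω ↦ Real.exp (t * (∑ i ∈ s, X i) ω)) P :=
    hind.integrable_exp_mul_sum hX fun i _ ↦
      integrable_exp_mul_of_mem_Icc (hX i).aemeasurable (h01 i)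
  have hmgf {t : ℝ} (ht : |t| ≤ 1) : mgf (∑ i ∈ s, X i) P t ≤ Real.exp (μ * (t + t ^ 2)) :=
    mgf_sum_le_exp_integral_mul (fun i ↦ (hX i).aemeasurable) hind h01 s ht
  have hupper : P.real {ω | (1 + δ) * μ ≤ (∑ i ∈ s, X i) ω} ≤ Real.exp (-(μ * δ ^ 2 / 4)) := by
    refine (measure_ge_le_exp_mul_mgf _ (t := δ / 2) (by positivity) (hint _)).trans ?_
    refine (mul_le_mul_of_nonneg_left (hmgf ?_) (Real.exp_pos _).le).trans_eq ?_
    · rw [abs_of_nonneg (by positivity)]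
      linarith
    · rw [← Real.exp_add]
      congr 1
      ring
  have hlower : P.real {ω | (∑ i ∈ s, X i) ω ≤ (1 - δ) * μ} ≤ Real.exp (-(μ * δ ^ 2 / 4)) := by
    refine (measure_le_le_exp_mul_mgf _ (t := -(δ / 2)) (by linarith) (hint _)).trans ?_
    refine (mul_le_mul_of_nonneg_left (hmgf ?_) (Real.exp_pos _).le).trans_eq ?_
    · rw [abs_neg, abs_of_nonneg (by positivity)]
      linarith
    · rw [← Real.exp_add]
      congr 1
      ring
  calc _ ≤ P.real ({ω | (1 + δ) * μ ≤ (∑ i ∈ s, X i) ω} ∪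
          {ω | (∑ i ∈ s, X i) ω ≤ (1 - δ) * μ}) := by
        refine measureReal_mono fun ω hω ↦ ?_
        simp only [mem_ofPred_eq, mem_Icc, not_and_or, not_le, mem_union, Finset.sum_apply] at hω ⊢
        exact hω.symm.imp le_of_lt le_of_lt
    _ ≤ _ := (measureReal_union_le _ _).trans (by linarith)

end Chernoff

theorem iIndepFun_curry {Ω ι κ α : Type*} {mΩ : MeasurableSpace Ω} {P : Measure Ω}
    [MeasurableSpace α] {X : ι → κ → Ω → α} (mX : ∀ i j, Measurable (X i j))
    (h : iIndepFun (fun q : ι × κ ↦ X q.1 q.2) P) : iIndepFun (fun i ω j ↦ X i j ω) P := by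
  have := h.isProbabilityMeasure
  have (i : ι) (j : κ) : IsProbabilityMeasure (P.map (X i j)) :=
    Measure.isProbabilityMeasure_map (mX i j).aemeasurable
  have hrow (i : ι) : iIndepFun (X i) P :=
    h.precomp (g := fun j ↦ (i, j)) fun _ _ hab ↦ (Prod.mk.inj hab).2
  have hcurry : (MeasurableEquiv.curry ι κ α) ∘ (fun ω (q : ι × κ) ↦ X q.1 q.2 ω) =
    fun ω i j ↦ X i j ω := rfl
  rw [iIndepFun_iff_map_fun_eq_infinitePi_map (by fun_prop), ← hcurry,
    ← Measure.map_map (by fun_prop) (by fun_prop),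
    (iIndepFun_iff_map_fun_eq_infinitePi_map (by fun_prop)).1 h,
    Measure.infinitePi_map_curry (fun i j ↦ P.map (X i j))]
  congrm Measure.infinitePi fun i ↦ ?_
  rw [(iIndepFun_iff_map_fun_eq_infinitePi_map (by fun_prop)).1 (hrow i)]

section BinomialRandom

variable {V : Type*}

theorem map_mem_edgeSet_binomialRandom [Countable V] (p : I) :
    (binomialRandom V p).map (fun G e ↦ e ∈ G.edgeSet) =
      Measure.infinitePi fun e : Sym2 V ↦
        toNNReal p • Measure.dirac (¬ e.IsDiag) + toNNReal (σ p) • Measure.dirac False := by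
  have hmeas : Measurable fun (G : SimpleGraph V) e ↦ e ∈ G.edgeSet := by fun_prop
  have := Measure.isProbabilityMeasure_map (μ := binomialRandom V p) hmeas.aemeasurable
  refine Measure.eq_of_le_of_isProbabilityMeasure (Measure.le_iff.2 fun s hs ↦ ?_)
  rw [Measure.map_apply hmeas hs, binomialRandom_apply]
  exact measure_mono (image_preimage_subset _ _)

theorem map_mem_edgeSet_binomialRandom_apply [Countable V] (p : I) (e : Sym2 V) :
    (binomialRandom V p).map (fun G ↦ e ∈ G.edgeSet) =
      toNNReal p • Measure.dirac (¬ e.IsDiag) + toNNReal (σ p) • Measure.dirac False := by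
  have h := congrArg (Measure.map fun ω : Sym2 V → Prop ↦ ω e) (map_mem_edgeSet_binomialRandom p)
  rwa [Measure.map_map (by fun_prop) (by fun_prop), Measure.infinitePi_map_eval] at h

theorem iIndepFun_mem_edgeSet [Countable V] (p : I) :
    iIndepFun (fun (e : Sym2 V) (G : SimpleGraph V) ↦ e ∈ G.edgeSet) (binomialRandom V p) := by
  rw [iIndepFun_iff_map_fun_eq_infinitePi_map (by fun_prop), map_mem_edgeSet_binomialRandom]
  simp_rw [map_mem_edgeSet_binomialRandom_apply]

theorem binomialRandom_real_notMem_edgeSet [Countable V] (p : I) {e : Sym2 V}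
    (he : ¬ e.IsDiag) : (binomialRandom V p).real {G | e ∉ G.edgeSet} = 1 - p := by
  have h := congrArg (fun μ : Measure Prop ↦ μ.real {False})
    (map_mem_edgeSet_binomialRandom_apply p e)
  rw [map_measureReal_apply (by fun_prop) (by measurability)] at h
  simpa [he, measureReal_def, Set.preimage] using h

instance discreteMeasurableSpace_simpleGraph [Finite V] :
    DiscreteMeasurableSpace (SimpleGraph V) where
  forall_measurableSet s := by
    rw [← measurableEmbedding_edgeSet.measurableSet_image]
    exact (Set.toFinite _).measurableSet

variable [Finite V]

theorem iIndepFun_exists_adj (p : I) {W Y : Finset V} (hWY : Disjoint W Y) :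
    iIndepFun (fun (w : W) (G : SimpleGraph V) ↦ ∃ y : Y, G.Adj y w) (binomialRandom V p) := by
  have hinj : Function.Injective fun q : W × Y ↦ s((q.2 : V), (q.1 : V)) := by
    rintro ⟨w, y⟩ ⟨w', y'⟩ h
    rcases Sym2.eq_iff.1 h with ⟨hy, hw⟩ | ⟨hy, -⟩
    · exact Prod.ext (Subtype.ext hw) (Subtype.ext hy)
    · exact (Finset.disjoint_left.1 hWY w'.2 (hy ▸ y.2)).elim
  have hadj : iIndepFun (fun (q : W × Y) (G : SimpleGraph V) ↦ G.Adj q.2 q.1)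
      (binomialRandom V p) :=
    (iIndepFun_mem_edgeSet p).precomp hinj
  exact (iIndepFun_curry (X := fun (w : W) (y : Y) (G : SimpleGraph V) ↦ G.Adj y w)
    (fun _ _ ↦ .of_discrete) hadj).comp (fun _ ω ↦ ∃ y, ω y) fun _ ↦ .of_discrete

theorem binomialRandom_real_exists_adj (p : I) {Y : Finset V} {w : V} (hw : w ∉ Y) :
    (binomialRandom V p).real {G | ∃ y : Y, G.Adj y w} = 1 - (1 - p : ℝ) ^ Y.card := by
  have hind : iIndepFun (fun (y : Y) (G : SimpleGraph V) ↦ G.Adj y w) (binomialRandom V p) :=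
    (iIndepFun_mem_edgeSet p).precomp (g := fun y : Y ↦ s((y : V), w)) fun _ _ h ↦
      Subtype.ext (Sym2.congr_left.1 h)
  have hnone : (binomialRandom V p).real {G | ∃ y : Y, G.Adj y w}ᶜ = (1 - p : ℝ) ^ Y.card := by
    have hcompl : {G : SimpleGraph V | ∃ y : Y, G.Adj y w}ᶜ =
        ⋂ y ∈ (Finset.univ : Finset Y), (fun G : SimpleGraph V ↦ G.Adj y w) ⁻¹' {False} := by
      ext G
      simp only [mem_compl_iff, mem_ofPred_eq, not_exists, mem_iInter, Finset.mem_univ,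
        forall_const, mem_preimage, mem_singleton_iff, eq_iff_iff, iff_false]
    have hfactor (y : Y) : (binomialRandom V p).real
        ((fun G : SimpleGraph V ↦ G.Adj y w) ⁻¹' {False}) = 1 - p := by
      rw [← binomialRandom_real_notMem_edgeSet p (e := s((y : V), w)) fun h ↦
        hw (Sym2.mk_isDiag_iff.1 h ▸ y.2)]
      congr 1
      ext; simp
    rw [hcompl, measureReal_def, hind.measure_inter_preimage_eq_mul _ fun _ _ ↦ .of_discrete,
      ENNReal.toReal_prod]
    simp only [← measureReal_def, hfactor, Finset.prod_const, Finset.card_univ, Fintype.card_coe]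
  linarith [probReal_add_probReal_compl (μ := binomialRandom V p)
    (s := {G | ∃ y : Y, G.Adj y w}) .of_discrete]

open Classical in
theorem binomialRandom_real_card_exists_adj_notMem_Icc_le (p : I) {W Y : Finset V}
    (hWY : Disjoint W Y) {δ : ℝ} (hδ0 : 0 ≤ δ) (hδ2 : δ ≤ 2) :
    (binomialRandom V p).real {G | ((W.filter fun w ↦ ∃ y : Y, G.Adj y w).card : ℝ) ∉
        Icc ((1 - δ) * (W.card * (1 - (1 - p : ℝ) ^ Y.card)))
          ((1 + δ) * (W.card * (1 - (1 - p : ℝ) ^ Y.card)))} ≤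
      2 * Real.exp (-(W.card * (1 - (1 - p : ℝ) ^ Y.card) * δ ^ 2 / 4)) := by
  set X : W → SimpleGraph V → ℝ := fun w ↦ {G | ∃ y : Y, G.Adj y w}.indicator 1
  have hind : iIndepFun X (binomialRandom V p) :=
    (iIndepFun_exists_adj p hWY).comp (fun _ P ↦ if P then 1 else 0) fun _ ↦ .of_discrete
  have hmean (w : W) : (binomialRandom V p)[X w] = 1 - (1 - p : ℝ) ^ Y.card := by
    rw [integral_indicator_one .of_discrete,
      binomialRandom_real_exists_adj p (Finset.disjoint_left.1 hWY w.2)]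
  have hcard (G : SimpleGraph V) :
      ((W.filter fun w ↦ ∃ y : Y, G.Adj y w).card : ℝ) = ∑ w, X w G := by
    rw [Finset.card_filter, Nat.cast_sum, ← Finset.sum_coe_sort]
    simp [X, Set.indicator_apply]
  have h01 (w : W) (G : SimpleGraph V) : X w G ∈ Icc (0 : ℝ) 1 :=
    ⟨indicator_nonneg (fun _ _ ↦ zero_le_one) G, indicator_le_self' (fun _ _ ↦ zero_le_one) G⟩
  simpa only [hmean, hcard, Finset.sum_const, Finset.card_univ, Fintype.card_coe, nsmul_eq_mul]
    using measureReal_sum_notMem_Icc_le (fun _ ↦ .of_discrete) hind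
      (fun w ↦ ae_of_all _ (h01 w)) Finset.univ hδ0 hδ2

end BinomialRandom

theorem gnpProb_eq_binomialRandom_real (n : ℕ) (p : I) (A : Set (SimpleGraph (Fin n))) :
    gnpProb n p A = (binomialRandom (Fin n) p).real A := by
  classical
  have hA : A = ((Finset.univ.filter (· ∈ A) : Finset (SimpleGraph (Fin n))) : Set _) := by
    ext; simp
  rw [gnpProb]
  conv_rhs => rw [hA, ← sum_measureReal_singleton]
  refine Finset.sum_congr rfl fun G _ ↦ ?_
  simp [measureReal_def, Set.ncard_eq_toFinset_card']

theorem gnpProb_le_one (n : ℕ) (p : I) (A : Set (SimpleGraph (Fin n))) : gnpProb n p A ≤ 1 := by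
  rw [gnpProb_eq_binomialRandom_real]
  exact measureReal_le_one

/-- The value `f G` is determined by which elements of `E` are edges of `G`. -/
def DependsOnEdges {V α : Type*} (f : SimpleGraph V → α) (E : Set (Sym2 V)) : Prop :=
  ∀ ⦃G H : SimpleGraph V⦄, (∀ e ∈ E, e ∈ G.edgeSet ↔ e ∈ H.edgeSet) → f G = f H

namespace DependsOnEdges

variable {V α β : Type*} {f : SimpleGraph V → α} {E F : Set (Sym2 V)}

theorem exists_eq_comp [Nonempty α] (hf : DependsOnEdges f E) :
    ∃ φ : (E → Prop) → α, f = φ ∘ fun G e ↦ (e : Sym2 V) ∈ G.edgeSet :=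
  (Function.factorsThrough_iff _).1 fun _ _ hGH ↦
    hf fun e he ↦ iff_of_eq (congrFun hGH ⟨e, he⟩)

theorem indepFun [Finite V] [Nonempty α] [Nonempty β] [MeasurableSpace α] [MeasurableSpace β]
    {g : SimpleGraph V → β} (hf : DependsOnEdges f E) (hg : DependsOnEdges g F)
    (hEF : Disjoint E F) (p : I) : IndepFun f g (binomialRandom V p) := by
  lift E to Finset (Sym2 V) using toFinite E
  lift F to Finset (Sym2 V) using toFinite F
  obtain ⟨φ, rfl⟩ := hf.exists_eq_comp
  obtain ⟨ψ, rfl⟩ := hg.exists_eq_comp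
  exact ((iIndepFun_mem_edgeSet p).indepFun_finset E F (Finset.disjoint_coe.1 hEF)
    fun _ ↦ .of_discrete).comp (φ := φ) (ψ := ψ) .of_discrete .of_discrete

end DependsOnEdges

theorem measureReal_mem_apply_le {Ω κ : Type*} [Finite κ] [MeasurableSpace Ω]
    [DiscreteMeasurableSpace Ω] {P : Measure Ω} [IsProbabilityMeasure P] (X : Ω → κ)
    (E : κ → Set Ω) {q : ℝ}
    (hE : ∀ x, P.real (X ⁻¹' {x} ∩ E x) ≤ P.real (X ⁻¹' {x}) * q) :
    P.real {ω | ω ∈ E (X ω)} ≤ q := by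
  have := Fintype.ofFinite κ
  have hdisj : Pairwise (Function.onFun Disjoint fun x ↦ X ⁻¹' {x}) := fun x y hxy ↦
    (disjoint_singleton.2 hxy).preimage X
  calc P.real {ω | ω ∈ E (X ω)} ≤ P.real (⋃ x, X ⁻¹' {x} ∩ E x) :=
        measureReal_mono fun ω hω ↦ mem_iUnion.2 ⟨X ω, rfl, hω⟩
    _ ≤ ∑ x, P.real (X ⁻¹' {x} ∩ E x) := measureReal_iUnion_fintype_le _
    _ ≤ ∑ x, P.real (X ⁻¹' {x}) * q := Finset.sum_le_sum fun x _ ↦ hE x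
    _ = q := by
      rw [← Finset.sum_mul, ← measureReal_iUnion_fintype hdisj fun _ ↦ .of_discrete,
        ← preimage_iUnion, iUnion_of_singleton, preimage_univ, probReal_univ, one_mul]

theorem mem_ball_add_two {V : Type*} {G : SimpleGraph V} {a w : V} {j : ℕ} :
    w ∈ G.ball a (j + 2 : ℕ) ↔ w ∈ G.ball a (j + 1 : ℕ) ∨
      ∃ y ∈ G.ball a (j + 1 : ℕ), G.Adj y w := by
  simp only [mem_ball]
  constructor
  · intro hw
    obtain ⟨walk, hwalk⟩ := exists_walk_of_edist_ne_top hw.ne_top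
    rw [← hwalk, Nat.cast_lt] at hw
    cases walk with
    | nil => exact .inl (by simp)
    | cons hadj tail =>
      refine .inr ⟨_, (edist_le tail).trans_lt ?_, hadj.symm⟩
      rw [Walk.length_cons] at hw
      exact_mod_cast Nat.lt_of_succ_lt_succ hw
  · rintro (hw | ⟨y, hy, hadj⟩)
    · exact hw.trans (by norm_cast; omega)
    · calc G.edist w a ≤ G.edist w y + G.edist y a := SimpleGraph.edist_triangle
        _ = 1 + G.edist y a := by rw [edist_eq_one_iff_adj.2 hadj.symm]
        _ < 1 + (j + 1 : ℕ) := (ENat.add_lt_add_iff_left ENat.one_ne_top).2 hy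
        _ = (j + 2 : ℕ) := by norm_cast; omega

section Exploration

variable {V : Type*} [Fintype V] {G H : SimpleGraph V} {A : Finset V} {u v w : V} {j : ℕ}

open Classical in
/-- The vertices at distance less than `j` from `A`: those already discovered when breadth-first
search from `A` starts on its `j`-th layer. The inequality is strict so that `openBall G A 0` is
empty and every layer is a difference of consecutive balls. -/
noncomputable def openBall (G : SimpleGraph V) (A : Finset V) (j : ℕ) : Finset V :=
  {w | ∃ a ∈ A, w ∈ G.ball a j}

theorem mem_openBall : w ∈ openBall G A j ↔ ∃ a ∈ A, w ∈ G.ball a j := by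
  simp [openBall]

@[simp]
theorem openBall_zero (G : SimpleGraph V) (A : Finset V) : openBall G A 0 = ∅ := by
  ext
  simp [mem_openBall]

@[simp]
theorem openBall_one (G : SimpleGraph V) (A : Finset V) : openBall G A 1 = A := by
  ext
  simp [mem_openBall]

theorem openBall_mono (G : SimpleGraph V) (A : Finset V) : Monotone (openBall G A) := by
  intro i j hij w
  simp only [mem_openBall]
  exact fun ⟨a, ha, haw⟩ ↦ ⟨a, ha, ball_mono (by gcongr) haw⟩

theorem mem_openBall_add_two : w ∈ openBall G A (j + 2) ↔
    w ∈ openBall G A (j + 1) ∨ ∃ y ∈ openBall G A (j + 1), G.Adj y w := by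
  simp only [mem_openBall, mem_ball_add_two]
  grind

open Classical in
/-- The vertices at distance exactly `j` from the set `A`. -/
noncomputable def layer (G : SimpleGraph V) (A : Finset V) (j : ℕ) : Finset V :=
  openBall G A (j + 1) \ openBall G A j

theorem mem_layer : w ∈ layer G A j ↔ w ∈ openBall G A (j + 1) ∧ w ∉ openBall G A j := by
  simp [layer]

@[simp]
theorem layer_zero (G : SimpleGraph V) (A : Finset V) : layer G A 0 = A := by
  simp [layer]

theorem mem_layer_succ :
    w ∈ layer G A (j + 1) ↔ w ∉ openBall G A (j + 1) ∧ ∃ y ∈ layer G A j, G.Adj y w := by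
  rw [mem_layer, mem_openBall_add_two]
  constructor
  · rintro ⟨hw | ⟨y, hy, hadj⟩, hnot⟩
    · exact absurd hw hnot
    refine ⟨hnot, y, mem_layer.2 ⟨hy, fun hy' ↦ hnot ?_⟩, hadj⟩
    cases j with
    | zero => simp at hy'
    | succ j => exact mem_openBall_add_two.2 (.inr ⟨y, hy', hadj⟩)
  · rintro ⟨hnot, y, hy, hadj⟩
    exact ⟨.inr ⟨y, (mem_layer.1 hy).1, hadj⟩, hnot⟩

theorem card_openBall_succ (G : SimpleGraph V) (A : Finset V) (j : ℕ) :
    (openBall G A (j + 1)).card = (openBall G A j).card + (layer G A j).card := by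
  classical
  rw [layer, ← Finset.card_sdiff_add_card_eq_card (openBall_mono G A j.le_succ), add_comm]

theorem mem_layer_singleton (hj : j ≠ 0) : w ∈ layer G {v} j ↔ G.dist w v = j := by
  rw [SimpleGraph.dist, ENat.toNat_eq_iff hj]
  simp only [mem_layer, mem_openBall, Finset.mem_singleton, exists_eq_left, mem_ball, not_lt,
    le_antisymm_iff, Nat.cast_add_one, ENat.lt_add_one_iff (ENat.natCast_ne_top j)]

theorem layer_pair_subset [DecidableEq V] (u v : V) :
    layer G {u, v} j ⊆ layer G {u} j ∪ layer G {v} j := by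
  intro w
  simp only [Finset.mem_union, mem_layer, mem_openBall]
  grind

/-- A vertex on exactly one of the spheres of radius `j` around `u` and `v` distinguishes `u` from
`v` by its distances. -/
theorem two_mul_card_layer_pair_le (hj : j ≠ 0) (u v : V) [DecidableEq V] :
    2 * (layer G {u, v} j).card ≤ (layer G {u} j).card + (layer G {v} j).card +
      (Finset.univ.filter fun s ↦ G.dist s u ≠ G.dist s v).card := by
  have hpair := Finset.card_le_card (layer_pair_subset (G := G) (j := j) u v)
  have hsymm : layer G {u} j \ layer G {v} j ∪ layer G {v} j \ layer G {u} j ⊆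
      Finset.univ.filter fun s ↦ G.dist s u ≠ G.dist s v := fun s ↦ by
    simp only [Finset.mem_union, Finset.mem_sdiff, mem_layer_singleton hj, Finset.mem_filter_univ]
    grind
  have hcard := Finset.card_le_card hsymm
  rw [Finset.card_union_of_disjoint disjoint_sdiff_sdiff] at hcard
  have h₁ := Finset.card_sdiff_add_card (layer G {u} j) (layer G {v} j)
  have h₂ := Finset.card_sdiff_add_card (layer G {v} j) (layer G {u} j)
  rw [Finset.union_comm] at h₂
  omega

theorem openBall_congr
    (h : ∀ e : Sym2 V, (∃ x ∈ e, x ∈ openBall G A j) → (e ∈ G.edgeSet ↔ e ∈ H.edgeSet)) :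
    openBall G A j = openBall H A j ∧ openBall G A (j + 1) = openBall H A (j + 1) := by
  induction j with
  | zero => simp
  | succ j ih =>
    have hj := (ih fun e ⟨x, hx, hxe⟩ ↦ h e ⟨x, hx, openBall_mono G A j.le_succ hxe⟩).2
    refine ⟨hj, Finset.ext fun w ↦ ?_⟩
    simp only [mem_openBall_add_two, ← hj]
    refine or_congr_right (exists_congr fun y ↦ and_congr_right fun hy ↦ ?_)
    exact h s(y, w) ⟨y, Sym2.mem_mk_left y w, hy⟩

end Exploration

open Classical in
theorem dependsOnEdges_card_exists_adj {V : Type*} {B W Y : Finset V}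
    (hY : Disjoint B Y) (hW : Disjoint B W) :
    DependsOnEdges (fun G : SimpleGraph V ↦ (W.filter fun w ↦ ∃ y : Y, G.Adj y w).card)
      {e | ∃ x ∈ e, x ∈ B}ᶜ := by
  intro G H hGH
  refine congrArg Finset.card (Finset.filter_congr fun w hw ↦ exists_congr fun y ↦ ?_)
  refine hGH s(↑y, w) ?_
  rintro ⟨x, hx, hxB⟩
  rcases Sym2.mem_iff.1 hx with rfl | rfl
  · exact Finset.disjoint_left.1 hY hxB y.2
  · exact Finset.disjoint_left.1 hW hxB hw

section StepProbability

variable {V : Type*} [Fintype V]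

theorem dependsOnEdges_openBall_eq (A B B' : Finset V) (j : ℕ) :
    DependsOnEdges (fun G ↦ (openBall G A j, openBall G A (j + 1)) = (B, B'))
      {e | ∃ x ∈ e, x ∈ B} := by
  have key {G H : SimpleGraph V}
      (hGH : ∀ e ∈ {e : Sym2 V | ∃ x ∈ e, x ∈ B}, e ∈ G.edgeSet ↔ e ∈ H.edgeSet)
      (hG : (openBall G A j, openBall G A (j + 1)) = (B, B')) :
      (openBall H A j, openBall H A (j + 1)) = (B, B') := by
    obtain ⟨rfl, rfl⟩ := Prod.ext_iff.1 hG
    obtain ⟨h₁, h₂⟩ := openBall_congr fun e he ↦ hGH e he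
    rw [h₁, h₂]
  exact fun G H hGH ↦ propext ⟨key hGH, key fun e he ↦ (hGH e he).symm⟩

/-- The expected size of the layer `j + 1` around `A` in `G(n, p)`, conditionally on the vertices
at distance at most `j` from `A` being as they are in `G`: each of the remaining vertices is joined
to the layer `j` with probability `1 - (1 - p) ^ |layer j|`. -/
noncomputable def meanNextLayer (p : ℝ) (G : SimpleGraph V) (A : Finset V) (j : ℕ) : ℝ :=
  (Fintype.card V - (openBall G A (j + 1)).card) * (1 - (1 - p) ^ (layer G A j).card)

/-- If the expected size of the layer `j + 1` around `A` is at least `m`, then its actual size is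
within a factor `1 ± δ` of the expectation. -/
def IsTypicalStep (p δ m : ℝ) (G : SimpleGraph V) (A : Finset V) (j : ℕ) : Prop :=
  m ≤ meanNextLayer p G A j → ((layer G A (j + 1)).card : ℝ) ∈
    Icc ((1 - δ) * meanNextLayer p G A j) ((1 + δ) * meanNextLayer p G A j)

open Classical in
theorem binomialRandom_real_openBall_eq_and_card_notMem_Icc_le (p : I) (A : Finset V) (j : ℕ)
    {B B' : Finset V} (hB : B ⊆ B') {δ μ : ℝ} (hδ₀ : 0 ≤ δ) (hδ₂ : δ ≤ 2)
    (hμ : μ = B'ᶜ.card * (1 - (1 - p : ℝ) ^ (B' \ B).card)) :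
    (binomialRandom V p).real {G | (openBall G A j, openBall G A (j + 1)) = (B, B') ∧
      ((B'ᶜ.filter fun w ↦ ∃ y : ↥(B' \ B), G.Adj y w).card : ℝ) ∉
        Icc ((1 - δ) * μ) ((1 + δ) * μ)} ≤
    (binomialRandom V p).real {G | (openBall G A j, openBall G A (j + 1)) = (B, B')} *
      (2 * Real.exp (-(μ * δ ^ 2 / 4))) := by
  let explored (G : SimpleGraph V) := (openBall G A j, openBall G A (j + 1))
  let next (G : SimpleGraph V) : ℕ := (B'ᶜ.filter fun w ↦ ∃ y : ↥(B' \ B), G.Adj y w).card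
  let atypical : Set ℕ := {s | (s : ℝ) ∉ Icc ((1 - δ) * μ) ((1 + δ) * μ)}
  have hindep : IndepFun (fun G ↦ explored G = (B, B')) next (binomialRandom V p) :=
    (dependsOnEdges_openBall_eq A B B' j).indepFun (dependsOnEdges_card_exists_adj
      Finset.disjoint_sdiff (disjoint_compl_right.mono_left hB)) disjoint_compl_right p
  calc (binomialRandom V p).real {G | explored G = (B, B') ∧ next G ∈ atypical}
      = (binomialRandom V p).real {G | explored G = (B, B')} *
        (binomialRandom V p).real (next ⁻¹' atypical) := by
        simpa [measureReal_def, ENNReal.toReal_mul, preimage, ofPred_and]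
          using congrArg ENNReal.toReal
            (hindep.measure_inter_preimage_eq_mul {True} atypical .of_discrete .of_discrete)
    _ ≤ (binomialRandom V p).real {G | explored G = (B, B')} *
        (2 * Real.exp (-(μ * δ ^ 2 / 4))) := by
        gcongr
        subst hμ
        exact binomialRandom_real_card_exists_adj_notMem_Icc_le p
          (disjoint_compl_left.mono_right Finset.sdiff_subset) hδ₀ hδ₂

theorem binomialRandom_real_not_isTypicalStep_le (p : I) (A : Finset V) (j : ℕ) {δ : ℝ}
    (hδ₀ : 0 ≤ δ) (hδ₂ : δ ≤ 2) (m : ℝ) :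
    (binomialRandom V p).real {G | ¬IsTypicalStep p δ m G A j} ≤
      2 * Real.exp (-(m * δ ^ 2 / 4)) := by
  classical
  let explored (G : SimpleGraph V) := (openBall G A j, openBall G A (j + 1))
  let mean (x : Finset V × Finset V) : ℝ := x.2ᶜ.card * (1 - (1 - p : ℝ) ^ (x.2 \ x.1).card)
  let next (x : Finset V × Finset V) (G : SimpleGraph V) : ℕ :=
    (x.2ᶜ.filter fun w ↦ ∃ y : ↥(x.2 \ x.1), G.Adj y w).card
  let atypical (x : Finset V × Finset V) : Set ℕ :=
    {s | (s : ℝ) ∉ Icc ((1 - δ) * mean x) ((1 + δ) * mean x)}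
  have hmean G : meanNextLayer p G A j = mean (explored G) := by
    simp [meanNextLayer, mean, explored, layer, Finset.card_compl, Nat.cast_sub,
      Finset.card_le_univ]
  have hnext G : (layer G A (j + 1)).card = next (explored G) G := by
    congr 1
    ext w
    simp [mem_layer_succ, explored, mem_layer]
  have hset : {G | ¬IsTypicalStep p δ m G A j} = {G | G ∈
      {H | m ≤ mean (explored G) ∧ next (explored G) H ∈ atypical (explored G)}} := by
    simp only [IsTypicalStep, hmean, hnext, Classical.not_imp]
    rfl
  rw [hset]
  refine measureReal_mem_apply_le explored
    (fun x ↦ {H | m ≤ mean x ∧ next x H ∈ atypical x}) fun x ↦ ?_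
  by_cases hm : m ≤ mean x
  swap
  · simp only [hm, false_and, ofPred_false, inter_empty, measureReal_empty]
    positivity
  rcases (explored ⁻¹' {x}).eq_empty_or_nonempty with hx | ⟨G, rfl⟩
  · simp [hx]
  simp only [hm, true_and]
  refine (binomialRandom_real_openBall_eq_and_card_notMem_Icc_le p A j
    (openBall_mono G A j.le_succ) hδ₀ hδ₂ rfl).trans ?_
  exact mul_le_mul_of_nonneg_left (by gcongr) measureReal_nonneg

end StepProbability

theorem one_sub_pow_le {p : ℝ} (hp₀ : 0 ≤ p) (hp₁ : p ≤ 1) (y : ℕ) :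
    (1 - p) ^ y ≤ 1 - p * y + (p * y) ^ 2 / 2 := by
  induction y with
  | zero => simp
  | succ y ih =>
    calc (1 - p) ^ (y + 1) = (1 - p) ^ y * (1 - p) := pow_succ _ _
      _ ≤ (1 - p * y + (p * y) ^ 2 / 2) * (1 - p) := by gcongr
      _ ≤ 1 - p * ↑(y + 1) + (p * ↑(y + 1)) ^ 2 / 2 := by
        push_cast
        nlinarith [mul_nonneg hp₀ (sq_nonneg (p * y)), sq_nonneg p]

theorem one_add_pow_le_one_add_two_mul {a : ℝ} {r : ℕ} (ha : 0 ≤ a) (har : r * a ≤ 1 / 2) :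
    (1 + a) ^ r ≤ 1 + 2 * (r * a) := by
  have hra : 0 ≤ r * a := by positivity
  calc (1 + a) ^ r ≤ Real.exp a ^ r := by gcongr; linarith [Real.add_one_le_exp a]
    _ = Real.exp (r * a) := (Real.exp_nat_mul a r).symm
    _ ≤ 1 / (1 - r * a) := Real.exp_bound_div_one_sub_of_interval hra (by linarith)
    _ ≤ 1 + 2 * (r * a) := by
      rw [div_le_iff₀ (by linarith)]
      nlinarith

section Growth

variable {V : Type*} [Fintype V] {G : SimpleGraph V} {A : Finset V} {p d δ : ℝ} {j r : ℕ}

theorem meanNextLayer_mem_Icc (hp₀ : 0 ≤ p) (hp₁ : p ≤ 1) (hd : d = p * Fintype.card V)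
    (hsmall : (openBall G A (j + 1)).card + d * (layer G A j).card ≤ δ * Fintype.card V) :
    meanNextLayer p G A j ∈
      Icc ((1 - δ) * (d * (layer G A j).card)) (d * (layer G A j).card) := by
  have hball : ((openBall G A (j + 1)).card : ℝ) ≤ Fintype.card V := by
    exact_mod_cast Finset.card_le_univ _
  have hlower := one_sub_pow_le hp₀ hp₁ (layer G A j).card
  have hupper := one_add_mul_le_pow (a := -p) (by linarith) (layer G A j).card
  rw [← sub_eq_add_neg] at hupper
  unfold meanNextLayer
  set y := ((layer G A j).card : ℝ)
  set q := (1 - p) ^ (layer G A j).card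
  set n := (Fintype.card V : ℝ)
  set u := ((openBall G A (j + 1)).card : ℝ)
  have hu : 0 ≤ u := by positivity
  have hpy : 0 ≤ p * y := by positivity
  subst hd
  constructor
  · calc (1 - δ) * (p * n * y) ≤ (n - u) * (p * y - (p * y) ^ 2 / 2) := by
          nlinarith [mul_le_mul_of_nonneg_left hsmall hpy, mul_nonneg hu (sq_nonneg (p * y)),
            mul_nonneg (mul_nonneg hpy hpy) (by positivity : 0 ≤ n)]
      _ ≤ (n - u) * (1 - q) := mul_le_mul_of_nonneg_left (by linarith) (by linarith)
  · calc (n - u) * (1 - q) ≤ n * (p * y) := by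
          gcongr
          · exact sub_nonneg.2 (pow_le_one₀ (by linarith) (by linarith))
          · linarith
          · linarith
      _ = p * n * y := by ring

theorem IsTypicalStep.card_layer_succ_mem_Icc (hstep : IsTypicalStep p δ (d / 2) G A j)
    (hp₀ : 0 ≤ p) (hp₁ : p ≤ 1) (hd : d = p * Fintype.card V) (hδ₀ : 0 ≤ δ) (hδ : δ ≤ 1 / 2)
    (hlayer : 1 ≤ ((layer G A j).card : ℝ))
    (hsmall : (openBall G A (j + 1)).card + d * (layer G A j).card ≤ δ * Fintype.card V) :
    ((layer G A (j + 1)).card : ℝ) ∈ Icc ((1 - 2 * δ) * d * (layer G A j).card)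
      ((1 + 2 * δ) * d * (layer G A j).card) := by
  have hd₀ : 0 ≤ d := hd ▸ by positivity
  obtain ⟨hmean₁, hmean₂⟩ := meanNextLayer_mem_Icc hp₀ hp₁ hd hsmall
  set y := ((layer G A j).card : ℝ)
  have hdy : d ≤ d * y := le_mul_of_one_le_right hd₀ hlayer
  obtain ⟨h₁, h₂⟩ := hstep (by nlinarith)
  constructor
  · nlinarith [mul_le_mul_of_nonneg_left hmean₁ (by linarith : 0 ≤ 1 - δ),
      mul_nonneg (sq_nonneg δ) (hd₀.trans hdy)]
  · nlinarith [mul_le_mul_of_nonneg_left hmean₂ (by linarith : 0 ≤ 1 + δ)]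

theorem card_openBall_add_mul_card_layer_le (hd₂ : 2 ≤ d) (hδ₀ : 0 ≤ δ) (hjδ : j * δ ≤ 1 / 16)
    (hA₂ : A.card ≤ 2) (hlayer : ((layer G A j).card : ℝ) ≤ A.card * ((1 + 2 * δ) * d) ^ j)
    (hball : ((openBall G A (j + 1)).card : ℝ) ≤ 2 * (A.card * ((1 + 2 * δ) * d) ^ j)) :
    (openBall G A (j + 1)).card + d * (layer G A j).card ≤ 5 * d ^ (j + 1) := by
  have hpow : A.card * ((1 + 2 * δ) * d) ^ j ≤ 2 * (5 / 4 * d ^ j) := by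
    rw [mul_pow]
    gcongr
    · exact_mod_cast hA₂
    · exact (one_add_pow_le_one_add_two_mul (by positivity) (by linarith)).trans (by linarith)
  calc (openBall G A (j + 1)).card + d * (layer G A j).card
      ≤ 2 * (2 * (5 / 4 * d ^ j)) + d * (2 * (5 / 4 * d ^ j)) := by
        gcongr
        · exact hball.trans (by gcongr)
        · exact hlayer.trans hpow
    _ ≤ 5 * d ^ (j + 1) := by
        rw [pow_succ]
        nlinarith [pow_nonneg (zero_le_two.trans hd₂) j]

theorem card_openBall_add_two_le {x : ℝ} (hx : 2 ≤ x)
    (hball : ((openBall G A (j + 1)).card : ℝ) ≤ 2 * (A.card * x ^ j))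
    (hlayer : ((layer G A (j + 1)).card : ℝ) ≤ A.card * x ^ (j + 1)) :
    ((openBall G A (j + 2)).card : ℝ) ≤ 2 * (A.card * x ^ (j + 1)) := by
  have : 2 * (A.card * x ^ j) ≤ A.card * x ^ (j + 1) :=
    calc 2 * (A.card * x ^ j) ≤ x * (A.card * x ^ j) := by gcongr
      _ = A.card * x ^ (j + 1) := by ring
  rw [card_openBall_succ, Nat.cast_add]
  linarith

theorem card_layer_mem_Icc_and_card_openBall_le (hp₀ : 0 ≤ p) (hp₁ : p ≤ 1)
    (hd : d = p * Fintype.card V) (hd₂ : 2 ≤ d) (hδ₀ : 0 ≤ δ) (hrδ : r * δ ≤ 1 / 16)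
    (hsmall : 5 * d ^ r ≤ δ * Fintype.card V) (hA₁ : 1 ≤ A.card) (hA₂ : A.card ≤ 2)
    (hstep : ∀ j < r, IsTypicalStep p δ (d / 2) G A j) (hj : j ≤ r) :
    ((layer G A j).card : ℝ) ∈
        Icc (A.card * ((1 - 2 * δ) * d) ^ j) (A.card * ((1 + 2 * δ) * d) ^ j) ∧
      ((openBall G A (j + 1)).card : ℝ) ≤ 2 * (A.card * ((1 + 2 * δ) * d) ^ j) := by
  induction j with
  | zero =>
    refine ⟨by simp, ?_⟩
    rw [zero_add, openBall_one, pow_zero, mul_one]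
    linarith [A.card.cast_nonneg (α := ℝ)]
  | succ j ih =>
    obtain ⟨⟨hl, hu⟩, hball⟩ := ih (by omega)
    have hA₁' : (1 : ℝ) ≤ A.card := mod_cast hA₁
    have hjr : (j + 1 : ℝ) ≤ r := mod_cast hj
    have hjδ : j * δ + δ ≤ 1 / 16 := by nlinarith
    have hδ : δ ≤ 1 / 16 := by linarith [mul_nonneg j.cast_nonneg hδ₀]
    have hlayer : 1 ≤ ((layer G A j).card : ℝ) := by
      refine le_trans ?_ hl
      exact one_le_mul_of_one_le_of_one_le hA₁' (one_le_pow₀ (by nlinarith))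
    have hexplored :=
      calc (openBall G A (j + 1)).card + d * (layer G A j).card ≤ 5 * d ^ (j + 1) :=
            card_openBall_add_mul_card_layer_le hd₂ hδ₀ (by linarith) hA₂ hu hball
        _ ≤ 5 * d ^ r := by
            gcongr
            linarith
        _ ≤ δ * Fintype.card V := hsmall
    obtain ⟨hl', hu'⟩ :=
      (hstep j hj).card_layer_succ_mem_Icc hp₀ hp₁ hd hδ₀ (by linarith) hlayer hexplored
    have hupper : ((layer G A (j + 1)).card : ℝ) ≤ A.card * ((1 + 2 * δ) * d) ^ (j + 1) :=
      calc _ ≤ (1 + 2 * δ) * d * (layer G A j).card := hu'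
        _ ≤ (1 + 2 * δ) * d * (A.card * ((1 + 2 * δ) * d) ^ j) := by gcongr
        _ = _ := by ring
    have hlower : A.card * ((1 - 2 * δ) * d) ^ (j + 1) ≤ (layer G A (j + 1)).card :=
      calc _ = (1 - 2 * δ) * d * (A.card * ((1 - 2 * δ) * d) ^ j) := by ring
        _ ≤ (1 - 2 * δ) * d * (layer G A j).card := by
            gcongr
            exact mul_nonneg (by linarith) (by linarith)
        _ ≤ _ := hl'
    exact ⟨⟨hlower, hupper⟩, card_openBall_add_two_le (by nlinarith) hball hupper⟩

theorem card_layer_mem_Icc (hp₀ : 0 ≤ p) (hp₁ : p ≤ 1)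
    (hd : d = p * Fintype.card V) (hd₂ : 2 ≤ d) (hδ₀ : 0 ≤ δ) (hrδ : r * δ ≤ 1 / 16)
    (hsmall : 5 * d ^ r ≤ δ * Fintype.card V) (hA₁ : 1 ≤ A.card) (hA₂ : A.card ≤ 2)
    (hstep : ∀ j < r, IsTypicalStep p δ (d / 2) G A j) :
    ((layer G A r).card : ℝ) ∈
      Icc (A.card * ((1 - 2 * (r * δ)) * d ^ r)) (A.card * ((1 + 4 * (r * δ)) * d ^ r)) := by
  obtain ⟨⟨hl, hu⟩, -⟩ :=
    card_layer_mem_Icc_and_card_openBall_le hp₀ hp₁ hd hd₂ hδ₀ hrδ hsmall hA₁ hA₂ hstep le_rfl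
  rcases r.eq_zero_or_pos with rfl | hr
  · simp
  have hδ : δ ≤ r * δ := le_mul_of_one_le_left hδ₀ (mod_cast hr)
  rw [mul_pow] at hl hu
  refine ⟨le_trans ?_ hl, hu.trans ?_⟩
  · have := one_add_mul_le_pow (a := -(2 * δ)) (by linarith) r
    rw [← sub_eq_add_neg] at this
    gcongr
    linarith
  · have := one_add_pow_le_one_add_two_mul (a := 2 * δ) (r := r) (by positivity) (by linarith)
    gcongr
    linarith

end Growth

/-- A greedy choice: each element of `S` is picked so as to separate at least the average number of
the items that are still unseparated. -/
theorem exists_card_le_card_filter_forall_not_le {κ ι : Type*} [Fintype κ] [Nonempty κ]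
    (sep : κ → ι → Prop) [∀ s i, Decidable (sep s i)] (P : Finset ι) {δ : ℝ} (hδ : δ ≤ 1)
    (hsep : ∀ i ∈ P, δ * Fintype.card κ ≤ (Finset.univ.filter fun s ↦ sep s i).card) (k : ℕ) :
    ∃ S : Finset κ, S.card ≤ k ∧
      ((P.filter fun i ↦ ∀ s ∈ S, ¬sep s i).card : ℝ) ≤ (1 - δ) ^ k * P.card := by
  induction k with
  | zero => exact ⟨∅, by simp⟩
  | succ k ih =>
    obtain ⟨S, hSk, hS⟩ := ih
    set U := P.filter fun i ↦ ∀ s ∈ S, ¬sep s i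
    classical
    obtain ⟨s, -, hs⟩ : ∃ s ∈ Finset.univ, δ * U.card ≤ ((U.filter (sep s)).card : ℝ) := by
      refine Finset.exists_le_of_sum_le Finset.univ_nonempty ?_
      calc ∑ _s : κ, δ * U.card = ∑ _i ∈ U, δ * Fintype.card κ := by
            simp only [Finset.sum_const, nsmul_eq_mul, Finset.card_univ]
            ring
        _ ≤ ∑ i ∈ U, ((Finset.univ.filter fun s ↦ sep s i).card : ℝ) :=
            Finset.sum_le_sum fun i hi ↦ hsep i (by grind)
        _ = ∑ s : κ, ((U.filter (sep s)).card : ℝ) := by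
            exact_mod_cast (Finset.sum_card_bipartiteAbove_eq_sum_card_bipartiteBelow
              (s := Finset.univ) sep).symm
    refine ⟨insert s S, (Finset.card_insert_le s S).trans (by omega), ?_⟩
    have hcard : ((U.filter (sep s)).card : ℝ) + (U.filter fun i ↦ ¬sep s i).card = U.card := by
      exact_mod_cast Finset.card_filter_add_card_filter_not (sep s)
    calc _ ≤ ((U.filter fun i ↦ ¬sep s i).card : ℝ) :=
          Nat.cast_le.2 (Finset.card_le_card fun i hi ↦ by grind)
      _ ≤ (1 - δ) * U.card := by linarith
      _ ≤ (1 - δ) * ((1 - δ) ^ k * P.card) := by gcongr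
      _ = (1 - δ) ^ (k + 1) * P.card := by ring

section Game

variable {V : Type*} {G : SimpleGraph V} {k : ℕ}

theorem localizationNumber_le_of_copsWin (h : CopsWin G k) : localizationNumber G ≤ k :=
  Nat.sInf_le h

theorem localizationNumber_le_card [Fintype V] (G : SimpleGraph V) :
    localizationNumber G ≤ Fintype.card V := by
  rcases {k | CopsWin G k}.eq_empty_or_nonempty with h | h
  · simp [localizationNumber, h]
  · obtain ⟨strategy, hcard, -⟩ := Nat.sInf_mem h
    exact (hcard []).symm.le.trans (Finset.card_le_univ _)

theorem probe_eq_iff {S : Finset V} {u v : V} :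
    probe G S u = probe G S v ↔ ∀ s ∈ S, G.dist s u = G.dist s v := by
  simp only [probe, Prod.mk.injEq, true_and, funext_iff]
  grind

open Classical in
/-- The positions in `C` of a robber whose probe result is `o`. -/
noncomputable def probeFiber (G : SimpleGraph V) (C : Finset V) (o : Finset V × (V → ℕ)) :
    Finset V :=
  C.filter fun x ↦ probe G o.1 x = o

theorem mem_probeFiber {C : Finset V} {o : Finset V × (V → ℕ)} {x : V} :
    x ∈ probeFiber G C o ↔ x ∈ C ∧ probe G o.1 x = o := by
  simp [probeFiber]

variable [Fintype V]

open Classical in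
/-- A superset of the positions the robber can occupy before the next probe, given the results `h`
of the previous ones: at each round it is cut down to the positions agreeing with the probe and
then enlarged by one move of the robber. -/
noncomputable def candidates (G : SimpleGraph V) (h : List (Finset V × (V → ℕ))) : Finset V :=
  h.foldl (fun C o ↦ (probeFiber G C o).biUnion fun x ↦ {y | y = x ∨ G.Adj x y}) Finset.univ

open Classical in
theorem candidates_append_singleton (h : List (Finset V × (V → ℕ))) (o : Finset V × (V → ℕ)) :
    candidates G (h ++ [o]) =
      (probeFiber G (candidates G h) o).biUnion fun x ↦ {y | y = x ∨ G.Adj x y} := by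
  simp [candidates]

theorem IsRobberWalk.mem_candidates {w : ℕ → V} (hw : IsRobberWalk G w)
    (strategy : CopStrategy V) (t : ℕ) : w t ∈ candidates G (gameHistory G strategy w t) := by
  classical
  induction t with
  | zero => simp [candidates, gameHistory]
  | succ t ih =>
    rw [gameHistory, candidates_append_singleton, Finset.mem_biUnion]
    refine ⟨w t, ?_, by simpa using hw t⟩
    exact mem_probeFiber.2 ⟨ih, rfl⟩

open Classical in
/-- The set of candidates shrinks from round to round until a probe leaves only one of them. -/
theorem copsWin_of_forall_exists_probeFiber {M : ℕ}
    (hM : ∀ v, (Finset.univ.filter fun y ↦ y = v ∨ G.Adj v y).card ≤ M)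
    (hS : ∀ C : Finset V, ∃ S : Finset V, S.card = k ∧ ∀ x ∈ C,
      (probeFiber G C (probe G S x)).card ≤ 1 ∨
        M * (probeFiber G C (probe G S x)).card < C.card) :
    CopsWin G k := by
  choose S hSk hS using hS
  let strategy : CopStrategy V := fun h ↦ S (candidates G h)
  refine ⟨strategy, fun h ↦ hSk _, fun w hw ↦ ?_⟩
  let C (t : ℕ) := candidates G (gameHistory G strategy w t)
  let P (t : ℕ) := probeFiber G (C t) (probe G (S (C t)) (w t))
  have hmem {w' : ℕ → V} (hw' : IsRobberWalk G w') {t : ℕ} (heq :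
      gameHistory G strategy w' (t + 1) = gameHistory G strategy w (t + 1)) : w' t ∈ P t := by
    obtain ⟨hpast, hnow⟩ := List.append_inj' heq rfl
    have hC := hw'.mem_candidates strategy t
    rw [hpast] at hC hnow
    have : probe G (S (C t)) (w' t) = probe G (S (C t)) (w t) := by simpa using hnow
    exact mem_probeFiber.2 ⟨hC, this⟩
  obtain ⟨t, ht⟩ : ∃ t, (P t).card ≤ 1 := by
    by_contra! hlarge
    have hdecr (t : ℕ) : (C (t + 1)).card < (C t).card :=
      calc (C (t + 1)).card ≤ (P t).card * M := by
            simp only [C, gameHistory, candidates_append_singleton]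
            exact Finset.card_biUnion_le_card_mul _ _ _ fun x _ ↦ hM x
        _ < (C t).card := by
            rw [mul_comm]
            exact (hS _ _ (hw.mem_candidates strategy t)).resolve_left (hlarge t).not_ge
    exact WellFounded.not_rel_apply_succ (r := (· < ·)) (fun t ↦ (C t).card) |>.elim
      fun t ht ↦ ht (hdecr t)
  exact ⟨t, fun w' hw' heq ↦ Finset.card_le_one.1 ht _ (hmem hw' heq) _ (hmem hw rfl)⟩

theorem exists_forall_card_offDiag_probeFiber_le [Nonempty V] {δ : ℝ} (hδ : δ ≤ 1)
    (hsep : ∀ u v, u ≠ v → δ * Fintype.card V ≤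
      (Finset.univ.filter fun s ↦ G.dist s u ≠ G.dist s v).card)
    (hk : k ≤ Fintype.card V) (C : Finset V) :
    ∃ S : Finset V, S.card = k ∧ ∀ x,
      ((probeFiber G C (probe G S x)).offDiag.card : ℝ) ≤ (1 - δ) ^ k * C.offDiag.card := by
  obtain ⟨S₀, hS₀, hcount⟩ := exists_card_le_card_filter_forall_not_le
    (fun s (x : V × V) ↦ G.dist s x.1 ≠ G.dist s x.2) C.offDiag hδ
    (fun x hx ↦ hsep x.1 x.2 (Finset.mem_offDiag.1 hx).2.2) k
  obtain ⟨S, hS₀S, hSk⟩ := Finset.exists_superset_card_eq hS₀ hk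
  refine ⟨S, hSk, fun x ↦ (Nat.cast_le.2 (Finset.card_le_card fun y hy ↦ ?_)).trans hcount⟩
  obtain ⟨h₁, h₂, hne⟩ := Finset.mem_offDiag.1 hy
  obtain ⟨h₁C, h₁x⟩ := mem_probeFiber.1 h₁
  obtain ⟨h₂C, h₂x⟩ := mem_probeFiber.1 h₂
  simp only [Finset.mem_filter, Finset.mem_offDiag, ne_eq, not_not]
  exact ⟨⟨h₁C, h₂C, hne⟩, fun s hs ↦ probe_eq_iff.1 (h₁x.trans h₂x.symm) s (hS₀S hs)⟩

open Classical in
theorem localizationNumber_le_of_forall_separated {M : ℕ} {δ : ℝ} (hδ : δ ≤ 1)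
    (hM : ∀ v, (Finset.univ.filter fun y ↦ y = v ∨ G.Adj v y).card ≤ M)
    (hsep : ∀ u v, u ≠ v → δ * Fintype.card V ≤
      (Finset.univ.filter fun s ↦ G.dist s u ≠ G.dist s v).card)
    (hk : 2 * M ^ 2 * (1 - δ) ^ k < 1) :
    localizationNumber G ≤ k := by
  rcases lt_or_ge (Fintype.card V) k with hkV | hkV
  · exact (localizationNumber_le_card G).trans hkV.le
  cases isEmpty_or_nonempty V
  · exact (localizationNumber_le_card G).trans (by simp)
  refine localizationNumber_le_of_copsWin (copsWin_of_forall_exists_probeFiber hM fun C ↦ ?_)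
  obtain ⟨S, hSk, hS⟩ := exists_forall_card_offDiag_probeFiber_le hδ hsep hkV C
  refine ⟨S, hSk, fun x _ ↦ ?_⟩
  have hpairs := hS x
  set P := probeFiber G C (probe G S x)
  by_contra! hP
  have hP₂ : (2 : ℝ) ≤ P.card := mod_cast hP.1
  have hPpairs : (P.card : ℝ) ^ 2 ≤ 2 * P.offDiag.card := by
    rw [Finset.offDiag_card, Nat.cast_sub (Nat.le_mul_self _)]
    push_cast
    nlinarith [mul_le_mul_of_nonneg_left hP₂ P.card.cast_nonneg]
  have hCpairs : (C.offDiag.card : ℝ) ≤ (M * P.card) ^ 2 := by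
    rw [Finset.offDiag_card]
    exact_mod_cast (Nat.sub_le _ _).trans (by nlinarith)
  refine lt_irrefl ((P.card : ℝ) ^ 2) ?_
  calc (P.card : ℝ) ^ 2 ≤ 2 * P.offDiag.card := hPpairs
    _ ≤ 2 * ((1 - δ) ^ k * C.offDiag.card) := by gcongr
    _ ≤ 2 * ((1 - δ) ^ k * (M * P.card) ^ 2) := by gcongr
    _ = 2 * M ^ 2 * (1 - δ) ^ k * (P.card : ℝ) ^ 2 := by ring
    _ < P.card ^ 2 := mul_lt_of_lt_one_left (by positivity) hk

end Game

section Localization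

variable {V : Type*} [Fintype V] {G : SimpleGraph V} {p d δ : ℝ} {k r : ℕ}

/-- All the breadth-first searches from one or two vertices of `G` are typical, in the sense of
`IsTypicalStep`, up to distance `r`; the threshold is half the average degree. -/
def IsTypicalUpTo (p δ : ℝ) (r : ℕ) (G : SimpleGraph V) : Prop :=
  ∀ A : Finset V, 1 ≤ A.card → A.card ≤ 2 →
    ∀ j < r, IsTypicalStep p δ (p * Fintype.card V / 2) G A j

namespace IsTypicalUpTo

open Classical in
theorem card_eq_or_adj_le (hG : IsTypicalUpTo p δ r G) (hp₀ : 0 ≤ p) (hp₁ : p ≤ 1)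
    (hd : d = p * Fintype.card V) (hd₂ : 2 ≤ d) (hδ₀ : 0 ≤ δ) (hr : 1 ≤ r)
    (hrδ : r * δ ≤ 1 / 16) (hsmall : 5 * d ^ r ≤ δ * Fintype.card V) (v : V) :
    ((Finset.univ.filter fun y ↦ y = v ∨ G.Adj v y).card : ℝ) ≤ 3 * d := by
  have hδ : δ ≤ 1 / 16 := (le_mul_of_one_le_left hδ₀ (mod_cast hr)).trans hrδ
  have hball : (Finset.univ.filter fun y ↦ y = v ∨ G.Adj v y) = openBall G {v} (1 + 1) := by
    ext y
    simp [mem_openBall_add_two (j := 0)]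
  have := (card_layer_mem_Icc_and_card_openBall_le hp₀ hp₁ hd hd₂ hδ₀ hrδ hsmall
    (by simp) (by simp) (hd ▸ hG {v} (by simp) (by simp)) hr).2
  rw [hball]
  simp only [Finset.card_singleton, Nat.cast_one, one_mul, pow_one] at this
  nlinarith

theorem le_card_dist_ne (hG : IsTypicalUpTo p δ r G) (hp₀ : 0 ≤ p) (hp₁ : p ≤ 1)
    (hd : d = p * Fintype.card V) (hd₂ : 2 ≤ d) (hδ₀ : 0 ≤ δ) (hr : 1 ≤ r)
    (hrδ : r * δ ≤ 1 / 16) (hsmall : 5 * d ^ r ≤ δ * Fintype.card V) {u v : V} (huv : u ≠ v) :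
    2 * (1 - 8 * (r * δ)) * d ^ r ≤
      (Finset.univ.filter fun s ↦ G.dist s u ≠ G.dist s v).card := by
  classical
  have hlayer (A : Finset V) (hA₁ : 1 ≤ A.card) (hA₂ : A.card ≤ 2) :=
    card_layer_mem_Icc hp₀ hp₁ hd hd₂ hδ₀ hrδ hsmall hA₁ hA₂ (hd ▸ hG A hA₁ hA₂)
  have hpair := (hlayer {u, v} (by simp [huv]) (by simp [huv])).1
  have hu := (hlayer {u} (by simp) (by simp)).2
  have hv := (hlayer {v} (by simp) (by simp)).2
  have hsep : 2 * ((layer G {u, v} r).card : ℝ) ≤ (layer G {u} r).card +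
      (layer G {v} r).card + (Finset.univ.filter fun s ↦ G.dist s u ≠ G.dist s v).card :=
    mod_cast two_mul_card_layer_pair_le (Nat.one_le_iff_ne_zero.1 hr) u v
  simp only [Finset.card_pair huv, Finset.card_singleton, Nat.cast_one, Nat.cast_ofNat]
    at hpair hu hv
  linarith

theorem localizationNumber_le (hG : IsTypicalUpTo p δ r G) (hp₀ : 0 ≤ p) (hp₁ : p ≤ 1)
    (hd : d = p * Fintype.card V) (hd₂ : 2 ≤ d) (hδ₀ : 0 ≤ δ)
    (hrδ : r * δ ≤ 1 / 16) (hsmall : 5 * d ^ r ≤ δ * Fintype.card V)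
    (hk : Real.log (18 * d ^ 2) < 2 * (1 - 8 * (r * δ)) * d ^ r / Fintype.card V * k) :
    localizationNumber G ≤ k := by
  have hV : 0 < (Fintype.card V : ℝ) := by
    by_contra! h
    nlinarith
  rcases r.eq_zero_or_pos with rfl | hr
  · have hlog : 2 ≤ Real.log (18 * d ^ 2) := by
      have hexp : Real.exp 2 = Real.exp 1 ^ 2 := by simp
      rw [Real.le_log_iff_exp_le (by positivity), hexp]
      nlinarith [Real.exp_one_lt_three, Real.exp_pos 1]
    have hVk : (Fintype.card V : ℝ) < k := by
      simp only [Nat.cast_zero, zero_mul, mul_zero, sub_zero, mul_one, pow_zero] at hk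
      rw [div_mul_eq_mul_div, lt_div_iff₀ hV] at hk
      nlinarith
    exact (localizationNumber_le_card G).trans (mod_cast hVk.le)
  set γ := 2 * (1 - 8 * (r * δ)) * d ^ r / Fintype.card V
  have hγ : γ * Fintype.card V = 2 * (1 - 8 * (r * δ)) * d ^ r := div_mul_cancel₀ _ hV.ne'
  have hδ : δ ≤ 1 / 16 := (le_mul_of_one_le_left hδ₀ (mod_cast hr)).trans hrδ
  have hγ₁ : γ ≤ 1 := by
    refine (div_le_one hV).2 ?_
    nlinarith [mul_nonneg (mul_nonneg (r.cast_nonneg (α := ℝ)) hδ₀) (by positivity : 0 ≤ d ^ r)]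
  refine localizationNumber_le_of_forall_separated (M := ⌊3 * d⌋₊) hγ₁
    (fun v ↦ Nat.le_floor (hG.card_eq_or_adj_le hp₀ hp₁ hd hd₂ hδ₀ hr hrδ hsmall v))
    (fun u v huv ↦ hγ ▸ hG.le_card_dist_ne hp₀ hp₁ hd hd₂ hδ₀ hr hrδ hsmall huv) ?_
  calc 2 * (⌊3 * d⌋₊ : ℝ) ^ 2 * (1 - γ) ^ k ≤ 2 * (3 * d) ^ 2 * Real.exp (-γ) ^ k := by
        gcongr
        · exact Nat.floor_le (by positivity)
        · exact Real.one_sub_le_exp_neg γ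
    _ = 18 * d ^ 2 / Real.exp (γ * k) := by
        rw [← Real.exp_nat_mul, mul_neg, Real.exp_neg, mul_comm (k : ℝ)]
        ring
    _ < 1 := (div_lt_one (Real.exp_pos _)).2 ((Real.log_lt_iff_lt_exp (by positivity)).1 hk)

end IsTypicalUpTo

end Localization

theorem binomialRandom_real_not_isTypicalUpTo_le {V : Type*} [Fintype V] [Nonempty V] (p : I)
    (r : ℕ) {δ : ℝ} (hδ₀ : 0 ≤ δ) (hδ₂ : δ ≤ 2) :
    (binomialRandom V p).real {G | ¬IsTypicalUpTo p δ r G} ≤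
      2 * r * Fintype.card V ^ 2 * Real.exp (-(p * Fintype.card V * δ ^ 2 / 8)) := by
  classical
  -- The sets of one or two vertices are exactly the sets `{u, v}` with `u` and `v` arbitrary.
  have hcover : {G : SimpleGraph V | ¬IsTypicalUpTo p δ r G} ⊆ ⋃ x : (V × V) × Fin r,
      {G | ¬IsTypicalStep p δ (p * Fintype.card V / 2) G {x.1.1, x.1.2} x.2} := by
    intro G hG
    simp only [Set.mem_ofPred_eq, IsTypicalUpTo, not_forall] at hG
    obtain ⟨A, hA₁, hA₂, j, hj, hstep⟩ := hG
    obtain ⟨u, v, rfl⟩ : ∃ u v, A = {u, v} := by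
      obtain hA | hA : A.card = 1 ∨ A.card = 2 := by lia
      · obtain ⟨u, rfl⟩ := Finset.card_eq_one.1 hA
        exact ⟨u, u, (Finset.pair_eq_singleton u).symm⟩
      · obtain ⟨u, v, -, rfl⟩ := Finset.card_eq_two.1 hA
        exact ⟨u, v, rfl⟩
    exact mem_iUnion.2 ⟨((u, v), ⟨j, hj⟩), hstep⟩
  calc (binomialRandom V p).real {G | ¬IsTypicalUpTo p δ r G}
      ≤ ∑ x : (V × V) × Fin r, (binomialRandom V p).real
          {G | ¬IsTypicalStep p δ (p * Fintype.card V / 2) G {x.1.1, x.1.2} x.2} :=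
        (measureReal_mono hcover).trans (measureReal_iUnion_fintype_le _)
    _ ≤ ∑ _x : (V × V) × Fin r,
          2 * Real.exp (-(p * Fintype.card V / 2 * δ ^ 2 / 4)) :=
        Finset.sum_le_sum fun x _ ↦ binomialRandom_real_not_isTypicalStep_le p _ _ hδ₀ hδ₂ _
    _ = 2 * r * Fintype.card V ^ 2 * Real.exp (-(p * Fintype.card V * δ ^ 2 / 8)) := by
      rw [Finset.sum_const, Finset.card_univ, nsmul_eq_mul]
      simp only [Fintype.card_prod, Fintype.card_fin, Nat.cast_mul]
      ring_nf

theorem one_sub_two_div_le_gnpProb_localizationNumber_le {n k r : ℕ} (p : I) {d δ : ℝ}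
    (hd : d = p * n) (hd₂ : 2 ≤ d) (hδ₀ : 0 ≤ δ) (hrδ : r * δ ≤ 1 / 16) (hδ₂ : δ ≤ 2)
    (hsmall : 5 * d ^ r ≤ δ * n) (hδn : 32 * Real.log n ≤ d * δ ^ 2)
    (hk : Real.log (18 * d ^ 2) < 2 * (1 - 8 * (r * δ)) * d ^ r / n * k) :
    1 - 2 / n ≤ gnpProb n p {G | localizationNumber G ≤ k} := by
  have hn : 0 < n := by
    by_contra! h
    obtain rfl := Nat.le_zero.1 h
    norm_num at hd
    linarith
  have hn' : (0 : ℝ) < n := mod_cast hn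
  have : Nonempty (Fin n) := ⟨⟨0, hn⟩⟩
  have hrn : (r : ℝ) ≤ n := by
    have : (r : ℝ) < 2 ^ r := mod_cast r.lt_two_pow_self
    have : (2 : ℝ) ^ r ≤ d ^ r := by gcongr
    nlinarith
  have hexp : Real.exp (-(d * δ ^ 2 / 8)) ≤ 1 / n ^ 4 := by
    calc Real.exp (-(d * δ ^ 2 / 8)) ≤ Real.exp (-(Real.log n * (4 : ℕ))) := by
          gcongr; push_cast; linarith
      _ = 1 / n ^ 4 := by
        rw [Real.exp_neg, mul_comm, Real.exp_nat_mul, Real.exp_log hn', one_div]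
  have hbad := binomialRandom_real_not_isTypicalUpTo_le (V := Fin n) p r hδ₀ hδ₂
  have hgood : {G : SimpleGraph (Fin n) | IsTypicalUpTo p δ r G} ⊆
      {G | localizationNumber G ≤ k} := fun G hG ↦
    hG.localizationNumber_le p.2.1 p.2.2 (by simpa using hd) hd₂ hδ₀ hrδ (by simpa using hsmall)
      (by simpa using hk)
  rw [Fintype.card_fin, ← hd] at hbad
  rw [gnpProb_eq_binomialRandom_real]
  calc 1 - 2 / (n : ℝ) = 1 - 2 * n * n ^ 2 * (1 / n ^ 4) := by field_simp
    _ ≤ 1 - (binomialRandom (Fin n) p).real {G | IsTypicalUpTo p δ r G}ᶜ := by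
      gcongr
      exact hbad.trans (by gcongr)
    _ = (binomialRandom (Fin n) p).real {G | IsTypicalUpTo p δ r G} := by
      rw [measureReal_compl .of_discrete, probReal_univ, sub_sub_cancel]
    _ ≤ _ := measureReal_mono hgood

section Asymptotics

theorem AAS.mono {p : ℕ → ℝ} {A B : ∀ n, Set (SimpleGraph (Fin n))} (hA : AAS p A)
    (hp : ∀ᶠ n in atTop, p n ∈ I) (hAB : ∀ᶠ n in atTop, A n ⊆ B n) : AAS p B := by
  refine tendsto_of_tendsto_of_tendsto_of_le_of_le' hA tendsto_const_nhds ?_ ?_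
  · filter_upwards [hp, hAB] with n hpn hn
    have := gnpProb_eq_binomialRandom_real n ⟨p n, hpn⟩
    rw [this, this]
    exact measureReal_mono hn
  · filter_upwards [hp] with n hpn using gnpProb_le_one n ⟨p n, hpn⟩ _

variable {p d c : ℕ → ℝ} {i r : ℕ → ℕ}

theorem aas_localizationNumber_le {δ : ℕ → ℝ} {k : ℕ → ℕ} (hp : ∀ᶠ n in atTop, p n ∈ I)
    (hd : ∀ n, d n = p n * n) (hd_top : Tendsto d atTop atTop) (hδ₀ : ∀ n, 0 ≤ δ n)
    (hrδ : Tendsto (fun n ↦ (r n + 1) * δ n) atTop (𝓝 0))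
    (hsmall : ∀ᶠ n in atTop, 5 * d n ^ r n ≤ δ n * n)
    (hδn : ∀ᶠ n : ℕ in atTop, 32 * Real.log n ≤ d n * δ n ^ 2)
    (hk : ∀ᶠ n in atTop,
      Real.log (18 * d n ^ 2) < 2 * (1 - 8 * (r n * δ n)) * d n ^ r n / n * k n) :
    AAS p fun n ↦ {G | localizationNumber G ≤ k n} := by
  have hlower : Tendsto (fun n : ℕ ↦ 1 - 2 / (n : ℝ)) atTop (𝓝 1) := by
    simpa using (tendsto_const_div_atTop_nhds_zero_nat (2 : ℝ)).const_sub 1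
  refine tendsto_of_tendsto_of_tendsto_of_le_of_le' hlower tendsto_const_nhds ?_ ?_
  · filter_upwards [hp, hd_top.eventually_ge_atTop 2, hrδ.eventually_le_const
      (by norm_num : (0 : ℝ) < 1 / 16), hsmall, hδn, hk] with n hpn hd₂ hrδ hsmall hδn hk
    have hrδ' : 0 ≤ r n * δ n := mul_nonneg (r n).cast_nonneg (hδ₀ n)
    exact one_sub_two_div_le_gnpProb_localizationNumber_le ⟨p n, hpn⟩ (hd n) hd₂ (hδ₀ n)
      (by linarith [hδ₀ n]) (by linarith) hsmall hδn hk
  · filter_upwards [hp] with n hpn using gnpProb_le_one n ⟨p n, hpn⟩ _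

theorem exists_error_of_isLittleO (hd₀ : ∀ᶠ n in atTop, 0 < d n)
    (hrd : (fun n ↦ (r n + 1) ^ 2 * Real.log n) =o[atTop] d)
    (hrn : (fun n ↦ (r n + 1) * d n ^ r n) =o[atTop] fun n ↦ (n : ℝ)) :
    ∃ δ : ℕ → ℝ, (∀ n, 0 ≤ δ n) ∧ Tendsto (fun n ↦ (r n + 1) * δ n) atTop (𝓝 0) ∧
      (∀ᶠ n in atTop, 5 * d n ^ r n ≤ δ n * n) ∧
      ∀ᶠ n : ℕ in atTop, 32 * Real.log n ≤ d n * δ n ^ 2 := by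
  have hδ₀ (n : ℕ) : 0 ≤ √(32 * Real.log n / d n) + 5 * |d n ^ r n| / n := by positivity
  refine ⟨fun n ↦ √(32 * Real.log n / d n) + 5 * |d n ^ r n| / n, hδ₀, ?_, ?_, ?_⟩
  · have hsqrt : Tendsto (fun n ↦ √(32 * ((r n + 1) ^ 2 * Real.log n / d n))) atTop (𝓝 0) := by
      simpa using (hrd.tendsto_div_nhds_zero.const_mul 32).sqrt
    have hpow := hrn.tendsto_div_nhds_zero.abs.const_mul 5
    have hsum := hsqrt.add hpow
    rw [abs_zero, mul_zero, add_zero] at hsum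
    refine hsum.congr fun n ↦ ?_
    have hr : (0 : ℝ) ≤ r n + 1 := by positivity
    rw [mul_add, ← mul_div_assoc 32, mul_left_comm 32, mul_div_assoc, Real.sqrt_mul (by positivity),
      Real.sqrt_sq hr, abs_div, abs_mul, abs_of_nonneg hr, Nat.abs_cast]
    ring
  · filter_upwards [eventually_gt_atTop 0] with n hn
    have hn' : (0 : ℝ) < n := mod_cast hn
    rw [add_mul, div_mul_cancel₀ _ hn'.ne']
    have := mul_nonneg (Real.sqrt_nonneg (32 * Real.log n / d n)) hn'.le
    linarith [le_abs_self (d n ^ r n)]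
  · filter_upwards [hd₀] with n hdn
    rw [← div_le_iff₀' hdn]
    exact (Real.sqrt_le_left (hδ₀ n)).1 (le_add_of_nonneg_right (by positivity))

theorem log_eighteen_mul_sq_lt {d x ξ k : ℝ} (hd : 0 < d) (hx : 0 < x) (hξ : ξ < 1)
    (hk : (Real.log d + 9) / (1 - ξ) * x ≤ k) :
    Real.log (18 * d ^ 2) < 2 * (1 - ξ) * k / x := by
  have hξ' : 0 < 1 - ξ := sub_pos.2 hξ
  calc Real.log (18 * d ^ 2) = Real.log 18 + 2 * Real.log d := by
        rw [Real.log_mul (by norm_num) (by positivity), Real.log_pow, Nat.cast_two]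
    _ < 2 * (1 - ξ) * ((Real.log d + 9) / (1 - ξ) * x) / x := by
        have := Real.log_le_sub_one_of_pos (by norm_num : (0 : ℝ) < 18)
        field_simp
        linarith
    _ ≤ 2 * (1 - ξ) * k / x := by gcongr

theorem exists_tendsto_zero_aas_localizationNumber_le (hp : ∀ᶠ n in atTop, p n ∈ I)
    (hd : ∀ n, d n = p n * n) (hd_top : Tendsto d atTop atTop)
    (hrd : (fun n ↦ (r n + 1) ^ 2 * Real.log n) =o[atTop] d)
    (hrn : (fun n ↦ (r n + 1) * d n ^ r n) =o[atTop] fun n ↦ (n : ℝ)) :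
    ∃ ε : ℕ → ℝ, Tendsto ε atTop (𝓝 0) ∧ AAS p fun n ↦
      {G | localizationNumber G ≤ (1 + ε n) * Real.log (d n) * (n / d n ^ r n)} := by
  obtain ⟨δ, hδ₀, hrδ, hsmall, hδn⟩ :=
    exists_error_of_isLittleO (hd_top.eventually_gt_atTop 0) hrd hrn
  have hlogd : Tendsto (fun n ↦ (Real.log (d n))⁻¹) atTop (𝓝 0) :=
    (Real.tendsto_log_atTop.comp hd_top).inv_tendsto_atTop
  have hξ : Tendsto (fun n ↦ 8 * (r n * δ n)) atTop (𝓝 0) := by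
    refine squeeze_zero (fun n ↦ ?_) (fun n ↦ ?_) (mul_zero (8 : ℝ) ▸ hrδ.const_mul 8)
    · have := hδ₀ n
      positivity
    · linarith [hδ₀ n]
  have hdn : Tendsto (fun n ↦ d n ^ r n / n) atTop (𝓝 0) := by
    refine squeeze_zero_norm (fun n ↦ ?_) (norm_zero (E := ℝ) ▸ hrn.tendsto_div_nhds_zero.norm)
    rw [mul_div_assoc, norm_mul]
    refine le_mul_of_one_le_left (norm_nonneg _) ?_
    exact (le_add_of_nonneg_left (r n).cast_nonneg).trans (Real.le_norm_self _)
  let k (n : ℕ) : ℕ := ⌈(Real.log (d n) + 9) / (1 - 8 * (r n * δ n)) * (n / d n ^ r n)⌉₊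
  refine ⟨fun n ↦ (1 + 9 * (Real.log (d n))⁻¹) / (1 - 8 * (r n * δ n)) +
    (Real.log (d n))⁻¹ * (d n ^ r n / n) - 1, ?_, ?_⟩
  · simpa using ((((hlogd.const_mul 9).const_add 1).div (hξ.const_sub 1) (by simp)).add
      (hlogd.mul hdn)).sub_const 1
  have hlarge : ∀ᶠ n : ℕ in atTop, 0 < n ∧ 1 < d n ∧ 8 * (r n * δ n) < 1 :=
    (eventually_gt_atTop 0).and
      ((hd_top.eventually_gt_atTop 1).and (hξ.eventually_lt_const one_pos))
  refine (aas_localizationNumber_le (k := k) hp hd hd_top hδ₀ hrδ hsmall hδn ?_).mono hp ?_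
  · filter_upwards [hlarge] with n ⟨hn, hdn, hξn⟩
    have hx : 0 < n / d n ^ r n := by positivity
    convert log_eighteen_mul_sq_lt (one_pos.trans hdn) hx hξn (Nat.le_ceil _) using 1
    simp only [k]
    field_simp
  · filter_upwards [hlarge] with n ⟨hn, hdn, hξn⟩ G hG
    have hlog : 0 < Real.log (d n) := Real.log_pos hdn
    have : 0 < 1 - 8 * (r n * δ n) := sub_pos.2 hξn
    calc (localizationNumber G : ℝ) ≤ k n := mod_cast hG
      _ ≤ (Real.log (d n) + 9) / (1 - 8 * (r n * δ n)) * (n / d n ^ r n) + 1 :=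
        (Nat.ceil_lt_add_one (by positivity)).le
      _ = _ := by field_simp; ring

theorem tendsto_log_natCast_atTop : Tendsto (fun n : ℕ ↦ Real.log n) atTop atTop :=
  Real.tendsto_log_atTop.comp tendsto_natCast_atTop_atTop

theorem eventually_mem_unitInterval (hd : ∀ n, d n = p n * n) (hd₀ : ∀ᶠ n in atTop, 0 < d n)
    (hdn : Tendsto (fun n ↦ d n / n) atTop (𝓝 0)) : ∀ᶠ n in atTop, p n ∈ I := by
  filter_upwards [hd₀, hdn.eventually_le_const one_pos, eventually_gt_atTop 0] with n hd₀ hdn hn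
  have hn' : (0 : ℝ) < n := mod_cast hn
  rw [hd] at hd₀ hdn
  exact ⟨(pos_of_mul_pos_left hd₀ hn'.le).le, by rwa [mul_div_cancel_right₀ _ hn'.ne'] at hdn⟩

theorem eventually_pow_pred_mul_le (hd₀ : ∀ᶠ n in atTop, 0 < d n)
    (hdn : Tendsto (fun n ↦ d n / n) atTop (𝓝 0))
    (hi : ∀ᶠ n : ℕ in atTop, d n ^ i n / n ≤ 3 * Real.log n) :
    ∀ᶠ n : ℕ in atTop, d n ^ (i n - 1) * d n ≤ 3 * n * Real.log n := by
  filter_upwards [hd₀, hdn.eventually_le_const one_pos, hi, eventually_gt_atTop 0,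
    tendsto_log_natCast_atTop.eventually_ge_atTop 1] with n hd₀ hdn hi hn hlog
  have hn' : (0 : ℝ) < n := mod_cast hn
  rw [div_le_iff₀ hn'] at hdn hi
  rcases (i n).eq_zero_or_pos with h | h
  · rw [h, zero_tsub, pow_zero]
    nlinarith
  · rw [pow_sub_one_mul h.ne']
    linarith

theorem eventually_radius_le_log (hlog3 : (fun n : ℕ ↦ Real.log n ^ 3) =o[atTop] d)
    (hd₀ : ∀ᶠ n in atTop, 0 < d n)
    (hr : ∀ᶠ n : ℕ in atTop, d n ^ r n * d n ≤ 3 * n * Real.log n) :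
    ∀ᶠ n : ℕ in atTop, r n ≤ Real.log n := by
  filter_upwards [hlog3.bound one_pos, hd₀, hr, eventually_gt_atTop 0,
    tendsto_log_natCast_atTop.eventually_ge_atTop 3] with n hlog3 hd₀ hr hn hlog
  have hn' : (0 : ℝ) < n := mod_cast hn
  rw [one_mul, Real.norm_of_nonneg (by positivity), Real.norm_of_nonneg hd₀.le] at hlog3
  have hd_ge : 3 * Real.log n ≤ d n := by nlinarith [sq_nonneg (Real.log n)]
  have hpow : d n ^ r n ≤ n := by
    refine le_of_mul_le_mul_right (hr.trans ?_) hd₀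
    nlinarith
  have hlogd : 1 ≤ Real.log (d n) := by
    rw [Real.le_log_iff_exp_le hd₀]
    linarith [Real.exp_one_lt_three]
  calc (r n : ℝ) ≤ r n * Real.log (d n) := le_mul_of_one_le_right (r n).cast_nonneg hlogd
    _ = Real.log (d n ^ r n) := (Real.log_pow _ _).symm
    _ ≤ Real.log n := by gcongr

theorem tendsto_atTop_of_log_pow_three_isLittleO
    (hlog3 : (fun n : ℕ ↦ Real.log n ^ 3) =o[atTop] d) (hd₀ : ∀ᶠ n in atTop, 0 < d n) :
    Tendsto d atTop atTop := by
  refine tendsto_atTop_mono' _ ?_ tendsto_log_natCast_atTop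
  filter_upwards [hlog3.bound one_pos, hd₀,
    tendsto_log_natCast_atTop.eventually_ge_atTop 1] with n hn hd₀ hlog
  rw [one_mul, Real.norm_of_nonneg (by positivity), Real.norm_of_nonneg hd₀.le] at hn
  exact (le_self_pow₀ hlog three_ne_zero).trans hn

theorem isLittleO_radius_sq_mul_log (hlog3 : (fun n : ℕ ↦ Real.log n ^ 3) =o[atTop] d)
    (hr : ∀ᶠ n : ℕ in atTop, r n ≤ Real.log n) :
    (fun n ↦ (r n + 1) ^ 2 * Real.log n) =o[atTop] d := by
  refine (Asymptotics.IsBigO.of_bound 4 ?_).trans_isLittleO hlog3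
  filter_upwards [hr, tendsto_log_natCast_atTop.eventually_ge_atTop 1] with n hr hlog
  rw [Real.norm_of_nonneg (by positivity), Real.norm_of_nonneg (by positivity)]
  calc (r n + 1 : ℝ) ^ 2 * Real.log n ≤ (2 * Real.log n) ^ 2 * Real.log n := by
        gcongr
        linarith
    _ = 4 * Real.log n ^ 3 := by ring

theorem isLittleO_radius_mul_pow (hlog3 : Tendsto (fun n : ℕ ↦ Real.log n ^ 3 / d n) atTop (𝓝 0))
    (hd₀ : ∀ᶠ n in atTop, 0 < d n) (hr : ∀ᶠ n : ℕ in atTop, r n ≤ Real.log n)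
    (hpow : ∀ᶠ n : ℕ in atTop, d n ^ r n * d n ≤ 3 * n * Real.log n) :
    (fun n ↦ (r n + 1) * d n ^ r n) =o[atTop] fun n ↦ (n : ℝ) := by
  have hlittle : (fun n : ℕ ↦ Real.log n ^ 3 / d n * n) =o[atTop] fun n ↦ (n : ℝ) := by
    simpa using ((Asymptotics.isLittleO_one_iff ℝ).2 hlog3).mul_isBigO
      (Asymptotics.isBigO_refl (fun n : ℕ ↦ (n : ℝ)) atTop)
  refine (Asymptotics.IsBigO.of_bound 6 ?_).trans_isLittleO hlittle
  filter_upwards [hr, hpow, hd₀,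
    tendsto_log_natCast_atTop.eventually_ge_atTop 1] with n hr hpow hd₀ hlog
  rw [Real.norm_of_nonneg (by positivity), Real.norm_of_nonneg (by positivity)]
  calc (r n + 1 : ℝ) * d n ^ r n ≤ 2 * Real.log n * (3 * n * Real.log n / d n) := by
        gcongr
        · linarith
        · exact (le_div_iff₀ hd₀).2 hpow
    _ = 6 * (Real.log n ^ 2 / d n * n) := by ring
    _ ≤ 6 * (Real.log n ^ 3 / d n * n) := by
        gcongr
        norm_num

theorem eventually_pos_of_window (hc : ∀ n, c n = d n ^ i n / n)
    (hlog3 : Tendsto (fun n : ℕ ↦ Real.log n ^ 3 / d n) atTop (𝓝 0))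
    (himax : ∀ᶠ n : ℕ in atTop, 3 * Real.log n < d n ^ (i n + 1) / n)
    (hcB : Tendsto (fun n ↦ c n - (Real.log (d n) - Real.log (Real.log (d n)))) atTop atTop) :
    ∀ᶠ n in atTop, 0 < d n := by
  have hlog3' : ∀ᶠ n : ℕ in atTop, |Real.log n ^ 3 / d n| < 1 :=
    (abs_zero (α := ℝ) ▸ hlog3.abs).eventually_lt_const one_pos
  filter_upwards [hlog3', himax, hcB.eventually_ge_atTop 0,
    tendsto_log_natCast_atTop.eventually_ge_atTop 1] with n hlog3 himax hcB hlog
  have hpow : 0 < d n ^ i n / n * d n := by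
    rw [div_mul_eq_mul_div, ← pow_succ]
    linarith
  have hlog_d : 0 < Real.log (d n) := by
    rw [abs_div, div_lt_one (abs_pos.2 (right_ne_zero_of_mul hpow.ne')),
      abs_of_nonneg (by positivity)] at hlog3
    rw [← Real.log_abs]
    exact Real.log_pos ((one_le_pow₀ hlog).trans_lt hlog3)
  have := Real.log_le_sub_one_of_pos hlog_d
  exact pos_of_mul_pos_right hpow (hc n ▸ by linarith)

theorem stmt16_localization_upper_bound_beyond_window_general
    (p d : ℕ → ℝ) (i : ℕ → ℕ)
    (hd : ∀ n, d n = p n * n)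
    (hd₀ : ∀ᶠ n in atTop, 0 < d n)
    (hlog3 : Tendsto (fun n : ℕ ↦ Real.log n ^ 3 / d n) atTop (𝓝 0))
    (hdn : Tendsto (fun n ↦ d n / n) atTop (𝓝 0))
    (hi : ∀ᶠ n : ℕ in atTop, d n ^ i n / n ≤ 3 * Real.log n) :
    ∃ ε : ℕ → ℝ, Tendsto ε atTop (𝓝 0) ∧ AAS p fun n ↦
      {G | localizationNumber G ≤ (1 + ε n) * Real.log (d n) * (n / d n ^ (i n - 1))} := by
  have hlittle : (fun n : ℕ ↦ Real.log n ^ 3) =o[atTop] d :=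
    Asymptotics.isLittleO_of_tendsto' (hd₀.mono fun _ h₀ h ↦ absurd h h₀.ne') hlog3
  have hpow := eventually_pow_pred_mul_le hd₀ hdn hi
  have hradius := eventually_radius_le_log hlittle hd₀ hpow
  exact exists_tendsto_zero_aas_localizationNumber_le (eventually_mem_unitInterval hd hd₀ hdn) hd
    (tendsto_atTop_of_log_pow_three_isLittleO hlittle hd₀)
    (isLittleO_radius_sq_mul_log hlittle hradius)
    (isLittleO_radius_mul_pow hlog3 hd₀ hradius hpow)

end Asymptotics

theorem stmt16_localization_upper_bound_beyond_window
    (p d : ℕ → ℝ) (i : ℕ → ℕ) (c : ℕ → ℝ)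
    (hd : ∀ n, d n = p n * n)
    (hc : ∀ n, c n = d n ^ i n / n)
    (hlog3 : Filter.Tendsto (fun n : ℕ => (Real.log n) ^ 3 / d n) Filter.atTop (nhds 0))
    (hdn : Filter.Tendsto (fun n : ℕ => d n / n) Filter.atTop (nhds 0))
    (himax : ∀ᶠ n : ℕ in Filter.atTop,
      c n ≤ 3 * Real.log n ∧ 3 * Real.log n < d n ^ (i n + 1) / n)
    (hcB : Filter.Tendsto
      (fun n : ℕ => c n - (Real.log (d n) - Real.log (Real.log (d n))))
      Filter.atTop Filter.atTop) :
    ∃ ε : ℕ → ℝ, Filter.Tendsto ε Filter.atTop (nhds 0) ∧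
      AAS p (fun n : ℕ =>
        {G : SimpleGraph (Fin n) |
          (localizationNumber G : ℝ)
            ≤ (1 + ε n) * (Real.log (d n) + 2 * Real.log (Real.log n))
                * (n / d n ^ (i n - 1))}) := by
  have hd₀ := eventually_pos_of_window hc hlog3 (himax.mono fun _ h ↦ h.2) hcB
  obtain ⟨ε, hε, haas⟩ := stmt16_localization_upper_bound_beyond_window_general p d i hd hd₀ hlog3
    hdn (himax.mono fun n h ↦ hc n ▸ h.1)
  refine ⟨ε, hε, haas.mono (eventually_mem_unitInterval hd hd₀ hdn) ?_⟩
  filter_upwards [hd₀, hε.eventually_const_le (by norm_num : (-1 : ℝ) < 0),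
    tendsto_log_natCast_atTop.eventually_ge_atTop 1] with n hd₀ hε hlog G hG
  have hε' : 0 ≤ 1 + ε n := by linarith
  have hloglog : 0 ≤ Real.log (Real.log n) := Real.log_nonneg hlog
  refine le_trans (α := ℝ) hG ?_
  gcongr
  linarith
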